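/- Let μ be a full Borel probability measure on ℝ^d, let W denote the set of nonnegative rational numbers, and let (C_w)_{w∈W} ⊆ D(μ) be invertible matrices with C_0 = I, C_{w+u} = C_w C_u for all w, u ∈ W, and det C_w = e^{−qw} for some positive integer q. Let S be the closure of {C_w : w ∈ W} in the space of d×d real matrices. Then for every A ∈ S: A ∈ A(μ) if and only if det A = 1; in other words, the kernel of the homomorphism A ↦ log det A on S equals S ∩ A(μ). -/

import Mathlib

open MeasureTheory Filter Topology Matrix

/-- Convolution of two Borel measures on `ℝ^d`. -/
noncomputable def mconv {d : ℕ} (μ ν : Measure (Fin d → ℝ)) : Measure (Fin d → ℝ) :=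
  (μ.prod ν).map (fun p => p.1 + p.2)

/-- The Urbanik decomposability semigroup `D(μ)`: all matrices `A` such that
`μ = (A_*μ) ∗ ν` for some probability measure `ν`. -/
def UrbanikD {d : ℕ} (μ : Measure (Fin d → ℝ)) : Set (Matrix (Fin d) (Fin d) ℝ) :=
  {A | ∃ ν : Measure (Fin d → ℝ), IsProbabilityMeasure ν ∧ μ = mconv (μ.map A.mulVec) ν}

/-- A measure on `ℝ^d` is full if its support is not contained in any hyperplane,
i.e. no translate `v + L` of a proper linear subspace `L` carries all of its mass. -/
def IsFull {d : ℕ} (μ : Measure (Fin d → ℝ)) : Prop :=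
  ∀ (v : Fin d → ℝ) (L : Submodule ℝ (Fin d → ℝ)), L ≠ ⊤ → μ {x | x - v ∈ L} < 1

/-- Weak convergence of a sequence of measures on `ℝ^d`. -/
def WeakLim {d : ℕ} (μs : ℕ → Measure (Fin d → ℝ)) (μ : Measure (Fin d → ℝ)) : Prop :=
  ∀ f : BoundedContinuousFunction (Fin d → ℝ) ℝ,
    Tendsto (fun n => ∫ x, f x ∂(μs n)) atTop (𝓝 (∫ x, f x ∂μ))

/-- Partial sums `S_n = X_1 + ... + X_n`. -/
def partialSum {Ω : Type*} {d : ℕ} (X : ℕ → Ω → (Fin d → ℝ)) (n : ℕ) (ω : Ω) :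
    Fin d → ℝ :=
  ∑ j ∈ Finset.Icc 1 n, X j ω

/-- The triangular array `(A_n X_j : 1 ≤ j ≤ n, n ≥ 1)` is infinitesimal:
`sup_{1 ≤ j ≤ n} P(‖A_n X_j‖ ≥ ε) → 0` as `n → ∞`, for every `ε > 0`. -/
def Infinitesimal {Ω : Type*} [MeasurableSpace Ω] {d : ℕ} (P : Measure Ω)
    (A : ℕ → Matrix (Fin d) (Fin d) ℝ) (X : ℕ → Ω → (Fin d → ℝ)) : Prop :=
  ∀ ε > (0 : ℝ), ∀ δ > (0 : ℝ), ∃ N : ℕ, ∀ n ≥ N, ∀ j : ℕ, 1 ≤ j → j ≤ n →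
    (P {ω | ε ≤ ‖(A n).mulVec (X j ω)‖}).toReal < δ

/-- The symmetry semigroup `A(μ)`: matrices `A` with `μ = (A_*μ) ∗ δ_a` for some `a`. -/
def SymmA {d : ℕ} (μ : Measure (Fin d → ℝ)) : Set (Matrix (Fin d) (Fin d) ℝ) :=
  {A | ∃ a : Fin d → ℝ, μ = μ.map (fun x => A.mulVec x + a)}

/-!
Elements of `D(μ)` act on the dual space without decreasing the modulus of the characteristic
function `φ_μ`. For a full measure `|φ_μ|` is bounded away from `1` on some small sphere but tends
to `1` at the origin, so these actions cannot carry a fixed small ball out to that sphere; hence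
`D(μ)` is bounded, and being closed it is a compact semigroup. Therefore all its elements have
`|det| ≤ 1`, and so `|det A| = 1` if `A` is a symmetry, since then `A⁻¹` also lies in `D(μ)`.

Conversely, the elements with `|det| = 1` form a compact semigroup whose only idempotent is `I`.
Every right ideal `A G` of a compact semigroup `G` contains an idempotent, so `|det A| = 1` forces
`A⁻¹ ∈ D(μ)`. Then `|φ_μ|` is invariant under the action of `A`, the characteristic function of the
cofactor has modulus `1` near the origin, and the cofactor is a point mass.
-/

section CharFunDual

lemma eq_of_exp_ofReal_mul_I_eq {s t : ℝ}
    (h : Complex.exp (s * Complex.I) = Complex.exp (t * Complex.I))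
    (hst : |s - t| < 2 * Real.pi) : s = t := by
  obtain ⟨k, hk⟩ := Complex.exp_eq_exp_iff_exists_int.1 h
  have hsub : s - t = k * (2 * Real.pi) :=
    sub_eq_iff_eq_add'.2 (by simpa using congrArg Complex.im hk)
  have hk0 : k = 0 := by
    rw [hsub, abs_mul, abs_of_pos Real.two_pi_pos, mul_lt_iff_lt_one_left Real.two_pi_pos] at hst
    exact Int.abs_lt_one_iff.1 (by exact_mod_cast hst)
  simpa [hk0, sub_eq_zero] using hsub

variable {E : Type*} [NormedAddCommGroup E] [NormedSpace ℝ E] [MeasurableSpace E]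
  {μ : Measure E}

lemma charFunDual_zero [IsProbabilityMeasure μ] : charFunDual μ 0 = 1 := by
  simp [charFunDual_apply]

lemma norm_charFunDual_le_one [IsProbabilityMeasure μ] (L : StrongDual ℝ E) :
    ‖charFunDual μ L‖ ≤ 1 := by
  simpa [charFunDual_apply] using
    norm_integral_le_of_norm_le_const (μ := μ)
      (.of_forall fun x => (Complex.norm_exp_ofReal_mul_I (L x)).le)

lemma continuous_charFunDual [BorelSpace E] [IsFiniteMeasure μ] : Continuous (charFunDual μ) := by
  simp only [funext charFunDual_apply]
  exact continuous_of_dominated (fun L => by fun_prop) (bound := fun _ => 1)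
    (fun L => .of_forall fun x => (Complex.norm_exp_ofReal_mul_I _).le)
    (integrable_const _) (.of_forall fun x => by fun_prop)

lemma ae_exp_eq_charFunDual [IsProbabilityMeasure μ] {L : StrongDual ℝ E}
    (h : ‖charFunDual μ L‖ = 1) :
    ∀ᵐ x ∂μ, Complex.exp (L x * Complex.I) = charFunDual μ L := by
  rcases ae_eq_const_or_norm_integral_lt_of_norm_le_const (μ := μ)
    (.of_forall fun x => (Complex.norm_exp_ofReal_mul_I (L x)).le) with hconst | hlt
  · rwa [average_eq_integral] at hconst
  · rw [← charFunDual_apply, h] at hlt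
    simp at hlt

lemma exists_ae_eventually_eq_of_norm_charFunDual_eq_one [IsProbabilityMeasure μ]
    {L : ℕ → StrongDual ℝ E} (hL : Tendsto L atTop (𝓝 0))
    (h : ∀ᶠ n in atTop, ‖charFunDual μ (L n)‖ = 1) :
    ∃ y, ∀ᵐ x ∂μ, ∀ᶠ n in atTop, L n x = L n y := by
  have hexp : ∀ᵐ x ∂μ, ∀ n, ‖charFunDual μ (L n)‖ = 1 →
      Complex.exp (L n x * Complex.I) = charFunDual μ (L n) :=
    ae_all_iff.2 fun n => eventually_imp_distrib_left.2 ae_exp_eq_charFunDual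
  obtain ⟨y, hy⟩ := hexp.exists
  refine ⟨y, hexp.mono fun x hx => ?_⟩
  have hsmall : Tendsto (fun n => L n x - L n y) atTop (𝓝 0) := by
    have heval : Continuous fun T : StrongDual ℝ E => T x - T y := by fun_prop
    simpa only [Function.comp_def, _root_.zero_apply, sub_self] using (heval.tendsto 0).comp hL
  filter_upwards [h, hsmall.eventually (Metric.ball_mem_nhds 0 Real.two_pi_pos)] with n hn hxy
  exact eq_of_exp_ofReal_mul_I_eq ((hx n hn).trans (hy n hn).symm) (by simpa using hxy)

lemma exists_eq_dirac_of_forall_ae_eq_const [SecondCountableTopology E]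
    [IsProbabilityMeasure μ] (h : ∀ L : StrongDual ℝ E, ∃ c, ∀ᵐ x ∂μ, L x = c) :
    ∃ a, μ = Measure.dirac a := by
  have hdiag : ∀ᵐ p ∂μ.prod μ, p.1 - p.2 = 0 := by
    refine ae_eq_zero_of_forall_dual ℝ fun L => ?_
    obtain ⟨c, hc⟩ := h L
    filter_upwards [Measure.quasiMeasurePreserving_fst.ae hc,
      Measure.quasiMeasurePreserving_snd.ae hc] with p hp₁ hp₂
    simp [hp₁, hp₂]
  obtain ⟨a, ha⟩ := (Measure.ae_ae_of_ae_prod hdiag).exists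
  have hconst : (fun x => x) =ᵐ[μ] fun _ => a := ha.mono fun x hx => (sub_eq_zero.1 hx).symm
  exact ⟨a, by simpa using Measure.map_congr hconst⟩

lemma exists_eq_dirac_of_eventually_norm_charFunDual_eq_one [BorelSpace E]
    [SecondCountableTopology E] [IsProbabilityMeasure μ]
    (h : ∀ᶠ L in 𝓝 0, ‖charFunDual μ L‖ = 1) : ∃ a, μ = Measure.dirac a := by
  refine exists_eq_dirac_of_forall_ae_eq_const fun L => ?_
  have hlim : Tendsto (fun n : ℕ => (1 / (n + 1 : ℝ)) • L) atTop (𝓝 0) := by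
    simpa using (tendsto_one_div_add_atTop_nhds_zero_nat (𝕜 := ℝ)).smul_const L
  obtain ⟨y, hy⟩ := exists_ae_eventually_eq_of_norm_charFunDual_eq_one hlim (hlim.eventually h)
  refine ⟨L y, hy.mono fun x hx => ?_⟩
  obtain ⟨n, hn⟩ := hx.exists
  simpa [n.cast_add_one_ne_zero] using hn

/-- A measure is nondegenerate if no nonzero continuous linear functional is almost everywhere
constant, that is, if the measure is not carried by a closed affine hyperplane. -/
def IsNondegenerate (μ : Measure E) : Prop :=
  ∀ (L : StrongDual ℝ E) (c : ℝ), (∀ᵐ x ∂μ, L x = c) → L = 0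

lemma IsNondegenerate.eventually_norm_charFunDual_lt_one [FiniteDimensional ℝ E]
    [IsProbabilityMeasure μ] (hμ : IsNondegenerate μ) :
    ∀ᶠ L in 𝓝[≠] 0, ‖charFunDual μ L‖ < 1 := by
  by_contra hfreq
  obtain ⟨L, hL, hone⟩ := exists_seq_forall_of_frequently (not_eventually.1 hfreq)
  obtain ⟨hL₀, hne⟩ := tendsto_nhdsWithin_iff.1 hL
  obtain ⟨y, hy⟩ := exists_ae_eventually_eq_of_norm_charFunDual_eq_one hL₀
    (.of_forall fun n => (norm_charFunDual_le_one _).antisymm (not_lt.1 (hone n)))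
  have hsphere : ∀ᶠ n in atTop, ‖L n‖⁻¹ • L n ∈ Metric.sphere (0 : StrongDual ℝ E) 1 :=
    hne.mono fun n hn => by simpa using norm_smul_inv_norm (𝕜 := ℝ) hn
  obtain ⟨U, hU, φ, hφ, hlim⟩ :=
    (isCompact_sphere (0 : StrongDual ℝ E) 1).tendsto_subseq' hsphere.frequently
  refine ne_zero_of_mem_unit_sphere ⟨U, hU⟩ (hμ U (U y) (hy.mono fun x hx => ?_))
  have heval (z : E) : Tendsto (fun n => (‖L (φ n)‖⁻¹ • L (φ n)) z) atTop (𝓝 (U z)) :=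
    ((ContinuousLinearMap.apply ℝ ℝ z).continuous.tendsto U).comp hlim
  refine tendsto_nhds_unique_of_eventuallyEq (heval x) (heval y) ?_
  filter_upwards [hφ.tendsto_atTop.eventually hx] with n hn
  simp [hn]

end CharFunDual

section Cofactor

open scoped Pointwise

lemma measure_mul_measure_le_conv {M : Type*} [AddMonoid M] [MeasurableSpace M] [MeasurableAdd₂ M]
    (κ ν : Measure M) [SFinite ν] {s t u : Set M} (hu : MeasurableSet u)
    (hadd : ∀ x ∈ s, ∀ y ∈ t, x + y ∈ u) : κ s * ν t ≤ (κ ∗ ν) u := by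
  rw [Measure.conv, Measure.map_apply (by fun_prop) hu, ← Measure.prod_prod]
  exact measure_mono fun p hp => hadd p.1 hp.1 p.2 hp.2

lemma isTightMeasureSet_range_of_conv {G : Type*} [AddCommGroup G] [TopologicalSpace G]
    [IsTopologicalAddGroup G] [T2Space G] [MeasurableSpace G] [OpensMeasurableSpace G]
    [MeasurableAdd₂ G] {ι : Type*} {κ ν : ι → Measure G} [∀ i, IsProbabilityMeasure (κ i)]
    [∀ i, SFinite (ν i)] (hκ : IsTightMeasureSet (Set.range κ))
    (hconv : IsTightMeasureSet (Set.range fun i => κ i ∗ ν i)) :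
    IsTightMeasureSet (Set.range ν) := by
  simp only [isTightMeasureSet_iff_exists_isCompact_measure_compl_le, Set.forall_mem_range]
    at hκ hconv ⊢
  intro ε hε
  obtain ⟨K₁, hK₁, hκK₁⟩ := hκ 2⁻¹ (by simp)
  obtain ⟨K, hK, hconvK⟩ := hconv (2⁻¹ * ε) (ENNReal.mul_pos (by simp) hε.ne')
  refine ⟨K + -K₁, hK.add hK₁.neg, fun i => ?_⟩
  have hhalf : 2⁻¹ ≤ κ i K₁ := by
    rw [← compl_compl K₁, prob_compl_eq_one_sub hK₁.measurableSet.compl, ← ENNReal.one_sub_inv_two]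
    exact tsub_le_tsub_left (hκK₁ i) 1
  have hsum : ∀ x ∈ K₁, ∀ y ∈ (K + -K₁)ᶜ, x + y ∈ Kᶜ := fun x hx y hy hxy =>
    hy ⟨x + y, hxy, -x, Set.neg_mem_neg.2 hx, by simp⟩
  have hbound : 2⁻¹ * ν i (K + -K₁)ᶜ ≤ 2⁻¹ * ε :=
    calc 2⁻¹ * ν i (K + -K₁)ᶜ ≤ κ i K₁ * ν i (K + -K₁)ᶜ := by gcongr
      _ ≤ (κ i ∗ ν i) Kᶜ := measure_mul_measure_le_conv _ _ hK.measurableSet.compl hsum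
      _ ≤ 2⁻¹ * ε := hconvK i
  exact (ENNReal.mul_le_mul_iff_right (by simp) (by simp)).1 hbound

variable {E : Type*} [NormedAddCommGroup E] [SecondCountableTopology E] [MeasurableSpace E]
  [BorelSpace E]

lemma tendsto_conv {ι : Type*} {l : Filter ι} {κ ν : ι → ProbabilityMeasure E}
    {κ₀ ν₀ : ProbabilityMeasure E} (hκ : Tendsto κ l (𝓝 κ₀)) (hν : Tendsto ν l (𝓝 ν₀)) :
    Tendsto (β := ProbabilityMeasure E) (fun i => ⟨κ i ∗ ν i, inferInstance⟩) l
      (𝓝 ⟨κ₀ ∗ ν₀, inferInstance⟩) :=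
  ((ProbabilityMeasure.continuous_map continuous_add).comp
    ProbabilityMeasure.continuous_prod).continuousAt.tendsto.comp (hκ.prodMk_nhds hν)

lemma exists_conv_eq_of_tendsto [CompleteSpace E] {κ ν : ℕ → ProbabilityMeasure E}
    {κ₀ μ : ProbabilityMeasure E} (hκ : Tendsto κ atTop (𝓝 κ₀))
    (h : ∀ n, (κ n : Measure E) ∗ (ν n : Measure E) = μ) :
    ∃ ν₀ : ProbabilityMeasure E, (κ₀ : Measure E) ∗ (ν₀ : Measure E) = μ := by
  have hκtight : IsTightMeasureSet (Set.range fun n => (κ n : Measure E)) := by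
    refine (isTightMeasureSet_of_isCompact_closure
      (hκ.isCompact_insert_range.closure_of_subset (Set.subset_insert κ₀ _))).subset ?_
    rintro _ ⟨n, rfl⟩
    exact ⟨κ n, ⟨n, rfl⟩, rfl⟩
  have hνtight : IsTightMeasureSet (Set.range fun n => (ν n : Measure E)) :=
    isTightMeasureSet_range_of_conv hκtight (by simpa [h] using isTightMeasureSet_singleton)
  have hcompact : IsCompact (closure (Set.range ν)) := by
    refine isCompact_closure_of_isTightMeasureSet (hνtight.subset ?_)
    rintro _ ⟨_, ⟨n, rfl⟩, rfl⟩
    exact ⟨n, rfl⟩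
  obtain ⟨ν₀, -, φ, hφ, hν⟩ := hcompact.tendsto_subseq fun n => subset_closure ⟨n, rfl⟩
  have hlim := tendsto_conv (hκ.comp hφ.tendsto_atTop) hν
  simp only [Function.comp_apply, h] at hlim
  exact ⟨ν₀, congrArg Subtype.val (tendsto_nhds_unique (X := ProbabilityMeasure E) hlim
    tendsto_const_nhds)⟩

end Cofactor

section Decomposability

variable {E : Type*} [NormedAddCommGroup E] [NormedSpace ℝ E] [MeasurableSpace E]

/-- The symmetry semigroup `A(μ)`: the operators `A` for which `A_*μ` is a translate of `μ`. -/
def symmetrySemigroup (μ : Measure E) : Set (E →L[ℝ] E) :=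
  {A | ∃ a, μ = μ.map (fun x => A x + a)}

variable [BorelSpace E] [SecondCountableTopology E]

/-- The Urbanik decomposability semigroup `D(μ)`: the operators `A` for which `A_*μ` is a
convolution factor of `μ` with a probability measure as cofactor. -/
def decomposabilitySemigroup (μ : Measure E) [SFinite μ] : Submonoid (E →L[ℝ] E) where
  carrier := {A | ∃ ν, IsProbabilityMeasure ν ∧ μ = μ.map A ∗ ν}
  one_mem' := ⟨Measure.dirac 0, inferInstance, by simp⟩
  mul_mem' := by
    rintro A B ⟨ν, hν, hA⟩ ⟨ρ, hρ, hB⟩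
    have : IsProbabilityMeasure (ρ.map A) := Measure.isProbabilityMeasure_map (by fun_prop)
    refine ⟨ρ.map A ∗ ν, inferInstance, ?_⟩
    calc μ = (μ.map B ∗ ρ).map A ∗ ν := by rw [← hB, ← hA]
      _ = μ.map (A * B) ∗ (ρ.map A ∗ ν) := by
        rw [Measure.map_conv_continuousLinearMap, Measure.conv_assoc,
          Measure.map_map (by fun_prop) (by fun_prop)]
        rfl

lemma symmetrySemigroup_subset_decomposabilitySemigroup (μ : Measure E) [SFinite μ] :
    symmetrySemigroup μ ⊆ decomposabilitySemigroup μ := by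
  rintro A ⟨a, ha⟩
  refine ⟨Measure.dirac a, inferInstance, ?_⟩
  rwa [Measure.conv_dirac, Measure.map_map (by fun_prop) (by fun_prop)]

lemma isClosed_decomposabilitySemigroup [CompleteSpace E] (μ : Measure E)
    [IsProbabilityMeasure μ] : IsClosed (decomposabilitySemigroup μ : Set (E →L[ℝ] E)) := by
  refine IsSeqClosed.isClosed fun B A hB hA => ?_
  choose ν hν hBν using hB
  have hlim := (tendstoInDistribution_of_ae_tendsto (μ' := μ) (X := fun n => B n) (Z := A)
    (fun n => by fun_prop) (by fun_prop)
    (.of_forall fun x => ((ContinuousLinearMap.apply ℝ E x).continuous.tendsto A).comp hA)).tendsto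
  obtain ⟨ν₀, hν₀⟩ := exists_conv_eq_of_tendsto (μ := ⟨μ, inferInstance⟩)
    (ν := fun n => ⟨ν n, hν n⟩) hlim fun n => (hBν n).symm
  exact ⟨ν₀, inferInstance, hν₀.symm⟩

variable {μ : Measure E} [IsProbabilityMeasure μ]

lemma norm_charFunDual_le_of_mem_decomposabilitySemigroup {A : E →L[ℝ] E}
    (hA : A ∈ decomposabilitySemigroup μ) (L : StrongDual ℝ E) :
    ‖charFunDual μ L‖ ≤ ‖charFunDual μ (L.comp A)‖ := by
  obtain ⟨ν, hν, hμ⟩ := hA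
  have : IsProbabilityMeasure (μ.map A) := Measure.isProbabilityMeasure_map (by fun_prop)
  calc ‖charFunDual μ L‖ = ‖charFunDual μ (L.comp A)‖ * ‖charFunDual ν L‖ := by
        conv_lhs => rw [hμ, charFunDual_conv, charFunDual_map, norm_mul]
    _ ≤ ‖charFunDual μ (L.comp A)‖ :=
        mul_le_of_le_one_right (norm_nonneg _) (norm_charFunDual_le_one L)

lemma mem_symmetrySemigroup_of_mul_eq_one {A B : E →L[ℝ] E}
    (hA : A ∈ decomposabilitySemigroup μ) (hB : B ∈ decomposabilitySemigroup μ) (hAB : A * B = 1) :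
    A ∈ symmetrySemigroup μ := by
  have hnorm (L : StrongDual ℝ E) : ‖charFunDual μ (L.comp A)‖ = ‖charFunDual μ L‖ := by
    refine le_antisymm ?_ (norm_charFunDual_le_of_mem_decomposabilitySemigroup hA L)
    calc ‖charFunDual μ (L.comp A)‖ ≤ ‖charFunDual μ ((L.comp A).comp B)‖ :=
          norm_charFunDual_le_of_mem_decomposabilitySemigroup hB _
      _ = ‖charFunDual μ L‖ := by
          rw [ContinuousLinearMap.comp_assoc, ← ContinuousLinearMap.mul_def, hAB,
            ContinuousLinearMap.one_def, ContinuousLinearMap.comp_id]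
  obtain ⟨ν, hν, hμ⟩ := hA
  have : IsProbabilityMeasure (μ.map A) := Measure.isProbabilityMeasure_map (by fun_prop)
  have hfactor (L : StrongDual ℝ E) :
      ‖charFunDual μ L‖ = ‖charFunDual μ L‖ * ‖charFunDual ν L‖ := by
    conv_lhs => rw [hμ, charFunDual_conv, charFunDual_map, norm_mul, hnorm]
  have hne : ∀ᶠ L in 𝓝 0, charFunDual μ L ≠ 0 :=
    continuous_charFunDual.continuousAt.eventually_ne (by simp [charFunDual_zero])
  obtain ⟨a, rfl⟩ := exists_eq_dirac_of_eventually_norm_charFunDual_eq_one <| hne.mono fun L hL =>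
    (mul_eq_left₀ (norm_ne_zero_iff.2 hL)).1 (hfactor L).symm
  exact ⟨a, by rwa [Measure.conv_dirac, Measure.map_map (by fun_prop) (by fun_prop)] at hμ⟩

end Decomposability

section Compactness

lemma norm_map_lt_of_forall_le_map {V : Type*} [NormedAddCommGroup V] [NormedSpace ℝ V]
    {f : V → ℝ} {T : V →ₗ[ℝ] V} {r ε c : ℝ} (hr : 0 < r) (hf : ∀ v, f v ≤ f (T v))
    (hsphere : ∀ v ∈ Metric.sphere 0 r, f v ≤ c) (hball : ∀ v ∈ Metric.ball 0 ε, c < f v)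
    {v : V} (hv : v ∈ Metric.ball 0 ε) : ‖T v‖ < r := by
  by_contra! hle
  have hpos : 0 < ‖T v‖ := hr.trans_le hle
  have hsmall : (r / ‖T v‖) • v ∈ Metric.ball (0 : V) ε := by
    rw [mem_ball_zero_iff] at hv ⊢
    calc ‖(r / ‖T v‖) • v‖ = r / ‖T v‖ * ‖v‖ := by
          rw [norm_smul, Real.norm_of_nonneg (by positivity)]
      _ ≤ ‖v‖ := mul_le_of_le_one_left (norm_nonneg v) ((div_le_one hpos).2 hle)
      _ < ε := hv
  have hlarge : T ((r / ‖T v‖) • v) ∈ Metric.sphere (0 : V) r := by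
    rw [map_smul, mem_sphere_zero_iff_norm, norm_smul, Real.norm_of_nonneg (by positivity),
      div_mul_cancel₀ _ hpos.ne']
  exact ((hf _).trans (hsphere _ hlarge)).not_gt (hball _ hsmall)

variable {E : Type*} [NormedAddCommGroup E] [NormedSpace ℝ E]

lemma opNorm_le_of_forall_norm_comp_le {F : Type*} [NormedAddCommGroup F] [NormedSpace ℝ F]
    {A : E →L[ℝ] F} {r ε : ℝ} (hε : 0 < ε)
    (h : ∀ L ∈ Metric.closedBall (0 : StrongDual ℝ F) ε, ‖L.comp A‖ ≤ r) : ‖A‖ ≤ r / ε := by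
  have hr : 0 ≤ r := (norm_nonneg _).trans (h 0 (Metric.mem_closedBall_self hε.le))
  refine A.opNorm_le_bound (by positivity) fun x => ?_
  obtain ⟨L, hL, hLx⟩ := exists_dual_vector'' ℝ (A x)
  have hmem : ε • L ∈ Metric.closedBall (0 : StrongDual ℝ F) ε := by
    rw [mem_closedBall_zero_iff, norm_smul, Real.norm_of_nonneg hε.le]
    exact mul_le_of_le_one_right hε.le hL
  rw [div_mul_eq_mul_div, le_div_iff₀' hε]
  calc ε * ‖A x‖ = ((ε • L).comp A) x := by simp [hLx]
    _ ≤ ‖(ε • L).comp A‖ * ‖x‖ := (le_abs_self _).trans (((ε • L).comp A).le_opNorm x)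
    _ ≤ r * ‖x‖ := by gcongr; exact h _ hmem

variable [FiniteDimensional ℝ E] [MeasurableSpace E] [BorelSpace E] {μ : Measure E}
  [IsProbabilityMeasure μ]

lemma IsNondegenerate.exists_norm_charFunDual_separation (hμ : IsNondegenerate μ) :
    ∃ r > 0, ∃ ε > 0, ∃ c, (∀ L ∈ Metric.sphere 0 r, ‖charFunDual μ L‖ ≤ c) ∧
      ∀ L ∈ Metric.ball 0 ε, c < ‖charFunDual μ L‖ := by
  have hcont : Continuous fun L => ‖charFunDual μ L‖ := continuous_charFunDual.norm
  obtain ⟨δ, hδ, hlt⟩ := Metric.mem_nhdsWithin_iff.1 hμ.eventually_norm_charFunDual_lt_one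
  have hr : 0 < δ / 2 := half_pos hδ
  obtain ⟨c, hc, hsphere⟩ :
      ∃ c < (1 : ℝ), ∀ L ∈ Metric.sphere (0 : StrongDual ℝ E) (δ / 2), ‖charFunDual μ L‖ ≤ c :=
    (isCompact_sphere _ _).exists_forall_le' (α := ℝᵒᵈ) hcont.continuousOn fun L hL =>
      hlt ⟨Metric.sphere_subset_ball (half_lt_self hδ) hL, Metric.ne_of_mem_sphere hL hr.ne'⟩
  obtain ⟨ε, hε, hball⟩ := Metric.eventually_nhds_iff_ball.1
    (hcont.continuousAt.eventually_const_lt (show c < ‖charFunDual μ 0‖ by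
      rwa [charFunDual_zero, norm_one]))
  exact ⟨δ / 2, hr, ε, hε, c, hsphere, hball⟩

lemma IsNondegenerate.isBounded_decomposabilitySemigroup (hμ : IsNondegenerate μ) :
    Bornology.IsBounded (decomposabilitySemigroup μ : Set (E →L[ℝ] E)) := by
  obtain ⟨r, hr, ε, hε, c, hsphere, hball⟩ := hμ.exists_norm_charFunDual_separation
  refine isBounded_iff_forall_norm_le.2 ⟨r / (ε / 2), fun A hA => ?_⟩
  refine opNorm_le_of_forall_norm_comp_le (half_pos hε) fun L hL => ?_
  exact (norm_map_lt_of_forall_le_map (f := fun L => ‖charFunDual μ L‖)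
    (T := (ContinuousLinearMap.precomp ℝ A).toLinearMap) hr
    (norm_charFunDual_le_of_mem_decomposabilitySemigroup hA) hsphere hball
    (Metric.closedBall_subset_ball (half_lt_self hε) hL)).le

lemma IsNondegenerate.isCompact_decomposabilitySemigroup (hμ : IsNondegenerate μ) :
    IsCompact (decomposabilitySemigroup μ : Set (E →L[ℝ] E)) :=
  have : CompleteSpace E := FiniteDimensional.complete ℝ E
  Metric.isCompact_of_isClosed_isBounded (isClosed_decomposabilitySemigroup μ)
    hμ.isBounded_decomposabilitySemigroup

end Compactness

section Determinant

lemma exists_mul_eq_one_of_isCompact_of_isIdempotentElem {M : Type*} [Monoid M]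
    [TopologicalSpace M] [T2Space M] [SeparatelyContinuousMul M] {S : Subsemigroup M}
    (hS : IsCompact (S : Set M)) (hidem : ∀ e ∈ S, IsIdempotentElem e → e = 1) {a : M}
    (ha : a ∈ S) : ∃ b ∈ S, a * b = 1 := by
  obtain ⟨_, ⟨b, hb, rfl⟩, he⟩ := exists_idempotent_in_compact_subsemigroup
    (fun r : M => continuous_mul_const r) ((a * ·) '' S) ⟨_, a, ha, rfl⟩
    (hS.image (continuous_const_mul a)) <| by
      rintro _ ⟨b, hb, rfl⟩ _ ⟨c, hc, rfl⟩
      exact ⟨b * (a * c), mul_mem hb (mul_mem ha hc), (mul_assoc a b (a * c)).symm⟩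
  exact ⟨b, hb, hidem _ (mul_mem ha hb) he⟩

lemma continuousLinearMap_det_mul {R M : Type*} [CommRing R] [AddCommGroup M] [Module R M]
    [TopologicalSpace M] (A B : M →L[R] M) : (A * B).det = A.det * B.det :=
  map_mul LinearMap.det (A : M →ₗ[R] M) B

variable {E : Type*} [NormedAddCommGroup E] [NormedSpace ℝ E] [MeasurableSpace E] [BorelSpace E]
  {μ : Measure E} {A B : E →L[ℝ] E}

lemma IsNondegenerate.eq_zero_of_comp_eq_zero (hμ : IsNondegenerate μ)
    (hA : A ∈ symmetrySemigroup μ) {L : StrongDual ℝ E} (hL : L.comp A = 0) : L = 0 := by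
  obtain ⟨a, ha⟩ := hA
  refine hμ L (L a) ?_
  rw [ha, ae_map_iff (by fun_prop) (isClosed_eq (by fun_prop) (by fun_prop)).measurableSet]
  refine .of_forall fun x => ?_
  simpa using DFunLike.congr_fun hL x

lemma mem_symmetrySemigroup_of_leftInverse (hA : A ∈ symmetrySemigroup μ) (hBA : B * A = 1) :
    B ∈ symmetrySemigroup μ := by
  obtain ⟨a, ha⟩ := hA
  refine ⟨-B a, ?_⟩
  have hinv : (fun y => B y + -B a) ∘ (fun x => A x + a) = id := by
    funext x
    simpa using DFunLike.congr_fun hBA x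
  conv_rhs => rw [ha, Measure.map_map (by fun_prop) (by fun_prop), hinv, Measure.map_id]

variable [FiniteDimensional ℝ E]

lemma IsNondegenerate.isUnit_of_mem_symmetrySemigroup (hμ : IsNondegenerate μ)
    (hA : A ∈ symmetrySemigroup μ) : IsUnit A := by
  have : CompleteSpace E := FiniteDimensional.complete ℝ E
  rw [ContinuousLinearMap.isUnit_iff_isUnit_toLinearMap, LinearMap.isUnit_iff_range_eq_top]
  by_contra hrange
  obtain ⟨L, hL, hle⟩ := Submodule.exists_le_ker_of_lt_top _ (lt_top_iff_ne_top.2 hrange)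
  have hcomp : L.toContinuousLinearMap.comp A = 0 := by
    ext x
    exact hle ⟨x, rfl⟩
  exact hL (by simpa using hμ.eq_zero_of_comp_eq_zero hA hcomp)

variable [IsProbabilityMeasure μ]

lemma IsNondegenerate.abs_det_le_one (hμ : IsNondegenerate μ)
    (hA : A ∈ decomposabilitySemigroup μ) : |A.det| ≤ 1 := by
  obtain ⟨C, hC⟩ := hμ.isCompact_decomposabilitySemigroup.exists_bound_of_continuousOn
    (f := ContinuousLinearMap.det) ContinuousLinearMap.continuous_det.continuousOn
  by_contra! hlt
  obtain ⟨n, hn⟩ := pow_unbounded_of_one_lt C hlt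
  refine (hC _ (pow_mem hA n)).not_gt ?_
  rwa [ContinuousLinearMap.det, ContinuousLinearMap.toLinearMap_pow, map_pow, Real.norm_eq_abs,
    abs_pow]

lemma IsNondegenerate.exists_mul_eq_one_of_abs_det_eq_one (hμ : IsNondegenerate μ)
    (hA : A ∈ decomposabilitySemigroup μ) (hdet : |A.det| = 1) :
    ∃ B ∈ decomposabilitySemigroup μ, A * B = 1 := by
  have : CompleteSpace E := FiniteDimensional.complete ℝ E
  let G : Subsemigroup (E →L[ℝ] E) :=
    { carrier := decomposabilitySemigroup μ ∩ {T | |T.det| = 1}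
      mul_mem' := fun {S T} ⟨hS, hSdet⟩ ⟨hT, hTdet⟩ => by
        refine ⟨mul_mem hS hT, ?_⟩
        rw [Set.mem_ofPred_eq, continuousLinearMap_det_mul, abs_mul, hSdet, hTdet, one_mul] }
  have hG : IsCompact (G : Set (E →L[ℝ] E)) := hμ.isCompact_decomposabilitySemigroup.inter_right
    (isClosed_eq ContinuousLinearMap.continuous_det.abs continuous_const)
  have hidem : ∀ T ∈ G, IsIdempotentElem T → T = 1 := by
    rintro T ⟨-, hT⟩
    refine (IsIdempotentElem.iff_eq_one_of_isUnit ?_).1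
    rw [ContinuousLinearMap.isUnit_iff_isUnit_toLinearMap, LinearMap.isUnit_iff_isUnit_det,
      isUnit_iff_ne_zero]
    exact abs_ne_zero.1 (hT.trans_ne one_ne_zero)
  obtain ⟨B, ⟨hB, -⟩, hAB⟩ :=
    exists_mul_eq_one_of_isCompact_of_isIdempotentElem hG hidem ⟨hA, hdet⟩
  exact ⟨B, hB, hAB⟩

theorem IsNondegenerate.mem_symmetrySemigroup_iff_abs_det_eq_one (hμ : IsNondegenerate μ)
    (hA : A ∈ decomposabilitySemigroup μ) : A ∈ symmetrySemigroup μ ↔ |A.det| = 1 := by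
  constructor
  · intro hsymm
    obtain ⟨B, hAB, hBA⟩ := isUnit_iff_exists.1 (hμ.isUnit_of_mem_symmetrySemigroup hsymm)
    have hB := symmetrySemigroup_subset_decomposabilitySemigroup μ
      (mem_symmetrySemigroup_of_leftInverse hsymm hBA)
    have hprod : |A.det| * |B.det| = 1 := by
      rw [← abs_mul, ← continuousLinearMap_det_mul, hAB]
      simp [ContinuousLinearMap.det]
    exact (hμ.abs_det_le_one hA).antisymm <|
      hprod ▸ mul_le_of_le_one_right (abs_nonneg _) (hμ.abs_det_le_one hB)
  · intro hdet
    obtain ⟨B, hB, hAB⟩ := hμ.exists_mul_eq_one_of_abs_det_eq_one hA hdet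
    exact mem_symmetrySemigroup_of_mul_eq_one hA hB hAB

end Determinant

section Matrices

variable {d : ℕ} {μ : Measure (Fin d → ℝ)} {A : Matrix (Fin d) (Fin d) ℝ}

lemma IsFull.isNondegenerate [IsProbabilityMeasure μ] (hμ : IsFull μ) : IsNondegenerate μ := by
  intro L c hL
  by_contra hne
  obtain ⟨v, hv⟩ := hL.exists
  have hker : (L : (Fin d → ℝ) →ₗ[ℝ] ℝ).ker ≠ ⊤ :=
    fun h => hne (ContinuousLinearMap.coe_inj.1 (LinearMap.ker_eq_top.1 h))
  have hae : ∀ᵐ x ∂μ, x - v ∈ (L : (Fin d → ℝ) →ₗ[ℝ] ℝ).ker := by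
    filter_upwards [hL] with x hx
    simp [hx, hv]
  exact (hμ v _ hker).ne ((measure_congr (eventuallyEq_univ.2 hae)).trans measure_univ)

lemma mem_symmA_iff : A ∈ SymmA μ ↔
    (Matrix.toLin' A).toContinuousLinearMap ∈ symmetrySemigroup μ :=
  Iff.rfl

lemma mem_urbanikD_iff [SFinite μ] : A ∈ UrbanikD μ ↔
    (Matrix.toLin' A).toContinuousLinearMap ∈ decomposabilitySemigroup μ :=
  Iff.rfl

lemma isClosed_urbanikD [IsProbabilityMeasure μ] : IsClosed (UrbanikD μ) :=
  (isClosed_decomposabilitySemigroup μ).preimage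
    (((Matrix.toLin' (R := ℝ) (m := Fin d) (n := Fin d)).trans
      LinearMap.toContinuousLinearMap).toLinearMap.continuous_of_finiteDimensional)

lemma IsFull.mem_symmA_iff_abs_det_eq_one [IsProbabilityMeasure μ] (hμ : IsFull μ)
    (hA : A ∈ UrbanikD μ) : A ∈ SymmA μ ↔ |A.det| = 1 := by
  rw [mem_symmA_iff,
    hμ.isNondegenerate.mem_symmetrySemigroup_iff_abs_det_eq_one (mem_urbanikD_iff.1 hA),
    LinearMap.det_toContinuousLinearMap, LinearMap.det_toLin']

end Matrices

theorem kernel_of_logdet_on_closure_general {d : ℕ} (μ : Measure (Fin d → ℝ))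
    [IsProbabilityMeasure μ] (hfull : IsFull μ) {S : Set (Matrix (Fin d) (Fin d) ℝ)}
    (hS : S ⊆ UrbanikD μ) (hdet : ∀ B ∈ S, 0 ≤ B.det) :
    ∀ A ∈ closure S, (A ∈ SymmA μ ↔ A.det = 1) := by
  intro A hA
  have hmem : A ∈ UrbanikD μ := closure_minimal hS isClosed_urbanikD hA
  have hnonneg : 0 ≤ A.det :=
    closure_minimal hdet (isClosed_le continuous_const continuous_id.matrix_det) hA
  rw [hfull.mem_symmA_iff_abs_det_eq_one hmem, abs_of_nonneg hnonneg]

/-- **Step 2 of Lemma 5.** Let `μ` be full, `(C_w)_{w ∈ ℚ≥0} ⊆ D(μ)` invertible with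
`C_0 = I`, `C_{w+u} = C_w C_u` and `det C_w = e^{-qw}` for a positive integer `q`, and
let `S` be the closure of `{C_w}`. Then for `A ∈ S`: `A ∈ A(μ) ↔ det A = 1`;
i.e. the kernel of `A ↦ log det A` on `S` is `S ∩ A(μ)`. -/
theorem kernel_of_logdet_on_closure
    {d : ℕ} (μ : Measure (Fin d → ℝ)) [IsProbabilityMeasure μ] (hfull : IsFull μ)
    (q : ℕ) (hq : 0 < q) (C : ℚ≥0 → Matrix (Fin d) (Fin d) ℝ)
    (hD : ∀ w, C w ∈ UrbanikD μ) (hinv : ∀ w, IsUnit (C w)) (h0 : C 0 = 1)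
    (hadd : ∀ w u, C (w + u) = C w * C u)
    (hdet : ∀ w, (C w).det = Real.exp (-(q * (w : ℝ)))) :
    ∀ A ∈ closure {A : Matrix (Fin d) (Fin d) ℝ | ∃ w, A = C w},
      (A ∈ SymmA μ ↔ A.det = 1) := by
  exact kernel_of_logdet_on_closure_general μ hfull (fun _ ⟨w, hw⟩ => hw ▸ hD w)
    fun _ ⟨w, hw⟩ => by rw [hw, hdet w]; exact (Real.exp_pos _).le
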